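/- (Cauchy estimate along the regularization path.) Let H be a real Hilbert space, L : H → ℝ convex, and for each λ > 0 let g_λ ∈ H be a minimizer of L_λ(g) = L(g) + (λ/2)‖g‖². Then for any 0 < λ_j ≤ λ_i, ‖g_{λ_j} − g_{λ_i}‖² ≤ ‖g_{λ_j}‖² − ‖g_{λ_i}‖². -/

import Mathlib

open MeasureTheory Filter Set
open scoped RealInnerProductSpace

/-!
A strongly convex function grows at least quadratically away from a minimizer. Let `u` minimize
`L_λ` and `v` minimize `L_μ`, where `μ ≤ λ`. Comparing `u` with `v` in both functionals and adding
the two growth inequalities cancels `L` and leaves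
`(λ + μ) ‖v - u‖² ≤ (λ - μ) (‖v‖² - ‖u‖²)`, which is stronger than the claim when `μ < λ` and
forces `v = u` when `μ = λ`.
-/

open scoped Topology

section Growth

variable {E : Type*} [NormedAddCommGroup E] [NormedSpace ℝ E] {s : Set E} {f : E → ℝ} {x y : E}

lemma add_le_of_isMinOn_of_uniformConvexOn {φ : ℝ → ℝ} (hf : UniformConvexOn s φ f)
    (hmin : IsMinOn f s x) (hx : x ∈ s) (hy : y ∈ s) : f x + φ ‖y - x‖ ≤ f y := by
  have segment_bound : ∀ t ∈ Ioo (0 : ℝ) 1, f x + (1 - t) * φ ‖y - x‖ ≤ f y := by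
    rintro t ⟨ht₀, ht₁⟩
    have hmem : t • y + (1 - t) • x ∈ s :=
      hf.1 hy hx ht₀.le (sub_nonneg.2 ht₁.le) (add_sub_cancel t 1)
    have hconv : f (t • y + (1 - t) • x) ≤
        t * f y + (1 - t) * f x - t * (1 - t) * φ ‖y - x‖ :=
      hf.2 hy hx ht₀.le (sub_nonneg.2 ht₁.le) (add_sub_cancel t 1)
    have hle : f x ≤ f (t • y + (1 - t) • x) := hmin hmem
    refine le_of_mul_le_mul_left ?_ ht₀
    linarith
  have hlim : Tendsto (fun t : ℝ ↦ f x + (1 - t) * φ ‖y - x‖) (𝓝[>] 0)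
      (𝓝 (f x + φ ‖y - x‖)) :=
    (Continuous.tendsto' (by fun_prop) _ _ (by simp)).mono_left nhdsWithin_le_nhds
  exact le_of_tendsto hlim (eventually_of_mem (Ioo_mem_nhdsGT one_pos) segment_bound)

end Growth

section Path

variable {H : Type*} [NormedAddCommGroup H] [InnerProductSpace ℝ H]

/-- The Tikhonov regularization `L_λ(g) = L(g) + (λ / 2)‖g‖²` of a functional `L`, whose minimizers
form the regularization path. -/
noncomputable def tikhonov (L : H → ℝ) (lam : ℝ) (g : H) : ℝ :=
  L g + lam / 2 * ‖g‖ ^ 2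

variable {s : Set H} {L : H → ℝ} {lam mu : ℝ} {u v : H}

lemma strongConvexOn_tikhonov (hL : ConvexOn ℝ s L) (lam : ℝ) :
    StrongConvexOn s lam (tikhonov L lam) := by
  simpa only [strongConvexOn_iff_convex, tikhonov, add_sub_cancel_right] using hL

lemma add_mul_norm_sub_sq_le_of_isMinOn_tikhonov (hL : ConvexOn ℝ s L)
    (hu : u ∈ s) (hu_min : IsMinOn (tikhonov L lam) s u)
    (hv : v ∈ s) (hv_min : IsMinOn (tikhonov L mu) s v) :
    (lam + mu) * ‖v - u‖ ^ 2 ≤ (lam - mu) * (‖v‖ ^ 2 - ‖u‖ ^ 2) := by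
  have growth_u : tikhonov L lam u + lam / 2 * ‖v - u‖ ^ 2 ≤ tikhonov L lam v :=
    add_le_of_isMinOn_of_uniformConvexOn (strongConvexOn_tikhonov hL lam) hu_min hu hv
  have growth_v : tikhonov L mu v + mu / 2 * ‖v - u‖ ^ 2 ≤ tikhonov L mu u := by
    rw [norm_sub_rev]
    exact add_le_of_isMinOn_of_uniformConvexOn (strongConvexOn_tikhonov hL mu) hv_min hv hu
  unfold tikhonov at growth_u growth_v
  linarith

theorem regularization_path_cauchy_general (hL : ConvexOn ℝ s L)
    (hmu : 0 ≤ mu) (hlam : 0 < lam) (hle : mu ≤ lam)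
    (hu : u ∈ s) (hu_min : IsMinOn (tikhonov L lam) s u)
    (hv : v ∈ s) (hv_min : IsMinOn (tikhonov L mu) s v) :
    ‖v - u‖ ^ 2 ≤ ‖v‖ ^ 2 - ‖u‖ ^ 2 := by
  have hsub := add_mul_norm_sub_sq_le_of_isMinOn_tikhonov hL hu hu_min hv hv_min
  rcases hle.eq_or_lt with rfl | hlt
  · have hvu : ‖v - u‖ ^ 2 ≤ 0 := by
      refine nonpos_of_mul_nonpos_right ?_ (add_pos hlam hlam)
      simpa only [sub_self, zero_mul] using hsub
    obtain rfl : v = u := by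
      simpa only [sq_nonpos_iff, norm_eq_zero, sub_eq_zero] using hvu
    simp
  · refine le_of_mul_le_mul_left ?_ (sub_pos.2 hlt)
    calc (lam - mu) * ‖v - u‖ ^ 2 ≤ (lam + mu) * ‖v - u‖ ^ 2 := by gcongr; linarith
      _ ≤ (lam - mu) * (‖v‖ ^ 2 - ‖u‖ ^ 2) := hsub

end Path

/-- Cauchy estimate along the regularization path. -/
theorem regularization_path_cauchy
    {H : Type*} [NormedAddCommGroup H] [InnerProductSpace ℝ H] [CompleteSpace H]
    (L : H → ℝ) (hLconv : ConvexOn ℝ Set.univ L)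
    (glam : ℝ → H)
    (hglam : ∀ lam : ℝ, 0 < lam → ∀ g : H,
      L (glam lam) + lam / 2 * ‖glam lam‖ ^ 2 ≤ L g + lam / 2 * ‖g‖ ^ 2) :
    ∀ lami lamj : ℝ, 0 < lamj → lamj ≤ lami →
      ‖glam lamj - glam lami‖ ^ 2 ≤ ‖glam lamj‖ ^ 2 - ‖glam lami‖ ^ 2 := by
  intro lami lamj hj hji
  exact regularization_path_cauchy_general hLconv hj.le (hj.trans_le hji) hji
    (mem_univ _) (fun g _ ↦ hglam lami (hj.trans_le hji) g) (mem_univ _) (fun g _ ↦ hglam lamj hj g)
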